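/- For every prime p, the Haar measures of the double cosets satisfy μ_p(K_p(1,0,0)) = p² + p + 1 and μ_p(K_p(1,0,−1)) = (p² + p)(p² + p + 1). -/

import Mathlib

open MeasureTheory

noncomputable section

variable (p : ℕ) [Fact p.Prime]

/-- The diagonal element `diag(p^a, p^b, p^c)` of `GL₃(ℚ_p)`. -/
def padicDiag (a b c : ℤ) : GL (Fin 3) ℚ_[p] := by
  have hp : (p : ℚ_[p]) ≠ 0 := by
    exact_mod_cast (Nat.cast_ne_zero (R := ℚ_[p])).mpr (Fact.out : p.Prime).ne_zero
  refine ⟨Matrix.diagonal ![(p : ℚ_[p]) ^ a, (p : ℚ_[p]) ^ b, (p : ℚ_[p]) ^ c],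
    Matrix.diagonal ![(p : ℚ_[p]) ^ (-a), (p : ℚ_[p]) ^ (-b), (p : ℚ_[p]) ^ (-c)], ?_, ?_⟩ <;>
  · rw [Matrix.diagonal_mul_diagonal]
    ext i j
    fin_cases i <;> fin_cases j <;>
      simp [zpow_neg, mul_inv_cancel₀ (zpow_ne_zero _ hp), inv_mul_cancel₀ (zpow_ne_zero _ hp)]

/-- `K_p = GL₃(ℤ_p)`, viewed as the image of `GL₃(ℤ_p)` inside `GL₃(ℚ_p)`. -/
def padicK : Set (GL (Fin 3) ℚ_[p]) :=
  Set.range fun u : (Matrix (Fin 3) (Fin 3) ℤ_[p])ˣ =>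
    Units.map (RingHom.toMonoidHom (RingHom.mapMatrix (PadicInt.Coe.ringHom (p := p)))) u

/-- The double coset `K_p · diag(p^a, p^b, p^c) · K_p`. -/
def padicDoubleCoset (a b c : ℤ) : Set (GL (Fin 3) ℚ_[p]) :=
  {x | ∃ k₁ ∈ padicK p, ∃ k₂ ∈ padicK p, x = k₁ * padicDiag p a b c * k₂}

/-- `Φ_p(a,b,c)`: the characteristic function of `K_p(a,b,c)`. -/
def padicPhi (a b c : ℤ) : GL (Fin 3) ℚ_[p] → ℝ :=
  (padicDoubleCoset p a b c).indicator fun _ => (1 : ℝ)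

instance : MeasurableSpace (GL (Fin 3) ℚ_[p]) := borel _

/-- Convolution of functions on `GL₃(ℚ_p)` with respect to a measure `μ`. -/
def padicConv (μ : Measure (GL (Fin 3) ℚ_[p])) (f h : GL (Fin 3) ℚ_[p] → ℝ) :
    GL (Fin 3) ℚ_[p] → ℝ :=
  fun x => ∫ y, f y * h (y⁻¹ * x) ∂μ

/-!
The double coset `K g K` is the preimage in `G` of the `K`-orbit of `g K` in `G ⧸ K`, so
`μ (K g K) = [K : K ∩ g K g⁻¹] * μ K` whenever that index is finite. For `K = GL₃(ℤ_p)` and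
`g = diag(p^e₀, p^e₁, p^e₂)`, the group `K ∩ g K g⁻¹` consists of the `k ∈ K` such that
`p^(eᵢ - eⱼ)` divides `k i j` whenever `eⱼ < eᵢ`. For `e = (1, 0, 0)` it is the preimage of the
stabilizer of a point of the projective plane over `𝔽_p`, which has `p² + p + 1` points. For
`e = (1, 0, -1)` the same congruences modulo `p` define the preimage of the stabilizer of a complete
flag, of index `(p + 1) (p² + p + 1)`, and the stronger condition `p² ∣ k 0 2` cuts out a subgroup
of index `p` in it.
-/

open Matrix
open scoped LinearAlgebra.Projectivization Pointwise

section DoubleCoset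

variable {G : Type*} [Group G]

theorem measure_preimage_quotientMk [MeasurableSpace G] [MeasurableMul G]
    (μ : Measure G) [μ.IsMulLeftInvariant] {K : Subgroup G} (hK : MeasurableSet (K : Set G))
    {S : Set (G ⧸ K)} (hS : S.Countable) :
    μ ((QuotientGroup.mk : G → G ⧸ K) ⁻¹' S) = S.encard * μ K := by
  have fiber_eq (q : G ⧸ K) :
      (QuotientGroup.mk : G → G ⧸ K) ⁻¹' {q} = (fun x => q.out⁻¹ * x) ⁻¹' (K : Set G) := by
    ext x
    conv_lhs => rw [← q.out_eq']
    exact eq_comm.trans QuotientGroup.eq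
  have fiber_measurable (q : G ⧸ K) :
      MeasurableSet ((QuotientGroup.mk : G → G ⧸ K) ⁻¹' {q}) := by
    rw [fiber_eq]
    exact measurable_const_mul _ hK
  calc μ (QuotientGroup.mk ⁻¹' S)
      = μ (⋃ q ∈ S, QuotientGroup.mk ⁻¹' {q}) := by rw [← Set.biUnion_preimage_singleton]
    _ = ∑' q : S, μ (QuotientGroup.mk ⁻¹' {(q : G ⧸ K)}) :=
        measure_biUnion hS (Set.pairwiseDisjoint_fiber _ _) fun q _ => fiber_measurable q
    _ = S.encard * μ K := by
        simp only [fiber_eq, measure_preimage_mul, ENNReal.tsum_const, Set.encard]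

theorem doubleCoset_eq_preimage_orbit (H K : Subgroup G) (g : G) :
    DoubleCoset.doubleCoset g (H : Set G) K =
      (QuotientGroup.mk : G → G ⧸ K) ⁻¹' MulAction.orbit H (g : G ⧸ K) := by
  ext x
  rw [← DoubleCoset.doubleCoset_union_leftCoset]
  simp only [Set.mem_iUnion, mem_leftCoset_iff, SetLike.mem_coe, Set.mem_preimage,
    MulAction.mem_orbit_iff]
  exact exists_congr fun h => QuotientGroup.eq.symm

theorem stabilizer_quotientMk (H K : Subgroup G) (g : G) :
    MulAction.stabilizer H (g : G ⧸ K) = (MulAut.conj g • K).subgroupOf H := by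
  ext h
  rw [MulAction.mem_stabilizer_iff, Subgroup.mem_subgroupOf,
    Subgroup.mem_pointwise_smul_iff_inv_smul_mem, ← map_inv, MulAut.smul_def, MulAut.conj_apply,
    inv_inv, mul_assoc, eq_comm]
  exact QuotientGroup.eq

theorem measure_doubleCoset [MeasurableSpace G] [MeasurableMul G]
    (μ : Measure G) [μ.IsMulLeftInvariant] (H : Subgroup G) {K : Subgroup G}
    (hK : MeasurableSet (K : Set G)) {g : G} (hg : (MulAut.conj g • K).relIndex H ≠ 0) :
    μ (DoubleCoset.doubleCoset g (H : Set G) K) = (MulAut.conj g • K).relIndex H * μ K := by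
  have ncard_orbit :
      (MulAction.orbit H (g : G ⧸ K)).ncard = (MulAut.conj g • K).relIndex H := by
    rw [← MulAction.index_stabilizer, stabilizer_quotientMk, Subgroup.relIndex]
  have orbit_finite : (MulAction.orbit H (g : G ⧸ K)).Finite :=
    Set.finite_of_ncard_ne_zero (ncard_orbit ▸ hg)
  rw [doubleCoset_eq_preimage_orbit, measure_preimage_quotientMk μ hK orbit_finite.countable,
    ← orbit_finite.cast_ncard_eq, ncard_orbit, ENat.toENNReal_coe]

theorem relIndex_eq_card_of_existsUnique_mul_mem {X : Type*} {H K : Subgroup G}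
    (u : X → K) (hu : ∀ k ∈ K, ∃! x, k * u x ∈ H) : H.relIndex K = Nat.card X := by
  refine (Nat.card_congr (Equiv.ofBijective (fun x => (u x : K ⧸ H.subgroupOf K)) ?_)).symm
  refine (Function.bijective_iff_existsUnique _).2 fun q => ?_
  induction q using QuotientGroup.induction_on with
  | H k => simpa only [eq_comm, QuotientGroup.eq] using! hu _ (inv_mem k.2)

end DoubleCoset

section GeneralLinearGroup

variable {n R S F : Type*} [Fintype n] [DecidableEq n] [CommRing R] [CommRing S] [Field F]

theorem mem_range_generalLinearGroup_map_iff {f : R →+* S} (hf : Function.Injective f)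
    {g : GL n S} :
    g ∈ (GeneralLinearGroup.map f).range ↔
      (∀ i j, g i j ∈ f.range) ∧ GeneralLinearGroup.det g ∈ (Units.map (f : R →* S)).range := by
  constructor
  · rintro ⟨k, rfl⟩
    exact ⟨fun i j => ⟨k i j, rfl⟩, GeneralLinearGroup.det k, (GeneralLinearGroup.map_det f k).symm⟩
  · rintro ⟨hg, u, hu⟩
    choose M hM using hg
    have map_M : f.mapMatrix (of M) = g.1 := by ext i j; exact hM i j
    have det_M : (of M).det = u :=
      hf (by rw [f.map_det, map_M]; exact congrArg Units.val hu.symm)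
    exact ⟨GeneralLinearGroup.mk'' (of M) (det_M ▸ u.isUnit), Units.ext map_M⟩

theorem generalLinearGroup_map_surjective (f : R →+* S) [IsLocalHom f]
    (hf : Function.Surjective f) : Function.Surjective (GeneralLinearGroup.map (n := n) f) := by
  intro g
  choose M hM using fun i j => hf (g i j)
  have map_M : f.mapMatrix (of M) = g.1 := by ext i j; exact hM i j
  have det_M : IsUnit (of M).det := by
    refine isUnit_of_map_unit f _ ?_
    rw [f.map_det, map_M]
    exact (isUnit_iff_isUnit_det _).1 g.isUnit
  exact ⟨GeneralLinearGroup.mk'' (of M) det_M, Units.ext map_M⟩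

instance : MulAction.IsPretransitive (GL n F) (ℙ F (n → F)) where
  exists_smul_eq x y := by
    have : MulAction.IsPretransitive (SpecialLinearGroup n F) (ℙ F (n → F)) :=
      MulAction.isPretransitive_of_is_two_pretransitive
    obtain ⟨g, rfl⟩ := MulAction.exists_smul_eq (SpecialLinearGroup n F) x y
    induction x using Projectivization.ind with
    | h v hv => exact ⟨g, rfl⟩

/-- The automorphism `g ↦ (g⁻¹)ᵀ` of `GL n R`, which exchanges conditions on the rows of a matrix
with conditions on the columns of its inverse. -/
def contragredient : GL n R ≃* GL n R where
  toFun g := ⟨g⁻¹.1ᵀ, g.1ᵀ, by simp [← transpose_mul], by simp [← transpose_mul]⟩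
  invFun g := ⟨g⁻¹.1ᵀ, g.1ᵀ, by simp [← transpose_mul], by simp [← transpose_mul]⟩
  left_inv g := by ext; simp
  right_inv g := by ext; simp
  map_mul' g h := by ext : 1; simp [transpose_mul]

theorem contragredient_inv_smul_single (g : GL n R) (i : n) :
    contragredient g⁻¹ • (Pi.single i 1 : n → R) = g.1 i := by
  rw [Units.smul_def, smul_eq_mulVec, mulVec_single_one]
  exact congrArg (fun h : GL n R => h.1 i) (inv_inv g)

end GeneralLinearGroup

section BlockTriangular

variable {m α : Type*} [Fintype m] [DecidableEq m] [LinearOrder α] {n : ℕ}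
  (R : Type*) [CommRing R] (F : Type*) [Field F]

/-- The standard parabolic subgroup of `GL m R` attached to `b`: the invertible matrices that are
block triangular for `b` in the sense of `Matrix.BlockTriangular`. -/
def blockTriangularSubgroup (b : m → α) : Subgroup (GL m R) where
  carrier := {g | g.1.BlockTriangular b}
  mul_mem' := BlockTriangular.mul
  one_mem' := blockTriangular_one
  inv_mem' {g} hg := by
    have := g.invertible
    simpa only [Set.mem_ofPred_eq, coe_units_inv] using blockTriangular_inv_of_blockTriangular hg

variable {R} in
theorem mem_blockTriangularSubgroup {b : m → α} {g : GL m R} :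
    g ∈ blockTriangularSubgroup R b ↔ ∀ ⦃i j⦄, b j < b i → g i j = 0 := Iff.rfl

theorem blockTriangularSubgroup_eq_top {b : m → α} (hb : ∀ i j, b i ≤ b j) :
    blockTriangularSubgroup R b = ⊤ :=
  eq_top_iff.2 fun _ _ i j hij => absurd hij (hb i j).not_gt

/-- The maximal parabolic subgroup of matrices whose first row is supported on the diagonal. -/
abbrev rowParabolic (n : ℕ) : Subgroup (GL (Fin (n + 1)) R) :=
  blockTriangularSubgroup R (Pi.single 0 1 : Fin (n + 1) → ℕ)

variable {R} in
theorem mem_rowParabolic {g : GL (Fin (n + 1)) R} :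
    g ∈ rowParabolic R n ↔ ∀ j : Fin n, g 0 j.succ = 0 := by
  simp [mem_blockTriangularSubgroup, Fin.forall_fin_succ]

theorem index_rowParabolic (n : ℕ) :
    (rowParabolic F n).index = Nat.card (ℙ F (Fin (n + 1) → F)) := by
  have e_ne_zero : (Pi.single 0 1 : Fin (n + 1) → F) ≠ 0 := by simp
  let ℓ : ℙ F (Fin (n + 1) → F) := .mk F (Pi.single 0 1) e_ne_zero
  have rowParabolic_eq : rowParabolic F n =
      (MulAction.stabilizer _ ℓ).comap contragredient.toMonoidHom := by
    ext g
    refine Iff.trans ?_ inv_mem_iff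
    rw [Subgroup.mem_comap, MulEquiv.coe_toMonoidHom, MulAction.mem_stabilizer_iff,
      Projectivization.smul_mk, Projectivization.mk_eq_mk_iff', contragredient_inv_smul_single,
      mem_rowParabolic]
    simp [funext_iff, Fin.forall_fin_succ, eq_comm]
  rw [rowParabolic_eq, Subgroup.index_comap_of_surjective _ contragredient.surjective,
    MulAction.index_stabilizer_of_transitive]

variable {R} in
theorem det_eq_mul_det_submatrix_succ {M : Matrix (Fin (n + 1)) (Fin (n + 1)) R}
    (hM : ∀ j : Fin n, M 0 j.succ = 0) :
    M.det = M 0 0 * (M.submatrix Fin.succ Fin.succ).det := by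
  simp [det_succ_row_zero, Fin.sum_univ_succ, hM]

/-- The projection of `rowParabolic R n` onto the `GL (Fin n) R` factor of its Levi quotient. -/
def lowerRightBlock (n : ℕ) : rowParabolic R n →* GL (Fin n) R :=
  MonoidHom.toHomUnits
    { toFun g := g.1.1.submatrix Fin.succ Fin.succ
      map_one' := submatrix_one _ (Fin.succ_injective n)
      map_mul' g h := by
        ext i j
        simp [mul_apply, Fin.sum_univ_succ, mem_rowParabolic.1 h.2 j] }

theorem lowerRightBlock_surjective (n : ℕ) : Function.Surjective (lowerRightBlock R n) := by
  intro h
  let M : Matrix (Fin (n + 1)) (Fin (n + 1)) R :=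
    of (Fin.cons (Pi.single 0 1) fun i => Fin.cons 0 (h i))
  have hM : ∀ j : Fin n, M 0 j.succ = 0 := by simp [M]
  have block_M : M.submatrix Fin.succ Fin.succ = h := by ext i j; simp [M]
  have det_M : IsUnit M.det := by
    rw [det_eq_mul_det_submatrix_succ hM, block_M]
    simp [M]
  exact ⟨⟨GeneralLinearGroup.mk'' M det_M, mem_rowParabolic.2 hM⟩, Units.ext block_M⟩

theorem index_blockTriangularSubgroup_succ {b : Fin (n + 1) → α}
    (hb : ∀ i : Fin n, b i.succ < b 0) :
    (blockTriangularSubgroup F b).index =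
      Nat.card (ℙ F (Fin (n + 1) → F)) * (blockTriangularSubgroup F (Fin.tail b)).index := by
  have le_rowParabolic : blockTriangularSubgroup F b ≤ rowParabolic F n :=
    fun g hg => mem_rowParabolic.2 fun j => hg (hb j)
  have subgroupOf_eq : (blockTriangularSubgroup F b).subgroupOf (rowParabolic F n) =
      (blockTriangularSubgroup F (Fin.tail b)).comap (lowerRightBlock F n) := by
    ext g
    simp only [Subgroup.mem_subgroupOf, Subgroup.mem_comap, mem_blockTriangularSubgroup,
      Fin.forall_fin_succ, lt_self_iff_false, IsEmpty.forall_iff, hb, (hb _).not_gt,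
      mem_rowParabolic.1 g.2, imp_self, implies_true, true_and]
    rfl
  rw [← Subgroup.relIndex_mul_index le_rowParabolic, Subgroup.relIndex, subgroupOf_eq,
    Subgroup.index_comap_of_surjective _ (lowerRightBlock_surjective F n), index_rowParabolic,
    mul_comm]

end BlockTriangular

section PadicIntegers

variable {p}

theorem mem_range_padicIntCoe_iff {y : ℚ_[p]} :
    y ∈ (PadicInt.Coe.ringHom (p := p)).range ↔ ‖y‖ ≤ 1 :=
  ⟨fun ⟨z, hz⟩ => hz ▸ z.norm_le_one, fun hy => ⟨⟨y, hy⟩, rfl⟩⟩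

theorem zpow_neg_mul_mem_range_padicIntCoe_iff {d : ℤ} {x : ℤ_[p]} :
    (p : ℚ_[p]) ^ (-d) * x ∈ (PadicInt.Coe.ringHom (p := p)).range ↔
      (p : ℤ_[p]) ^ d.toNat ∣ x := by
  rw [mem_range_padicIntCoe_iff]
  have hp : (0 : ℝ) < p := mod_cast (Fact.out : p.Prime).pos
  obtain hd | hd := le_total 0 d
  · lift d to ℕ using hd
    rw [Int.toNat_natCast, ← Ideal.mem_span_singleton, ← PadicInt.norm_le_pow_iff_mem_span_pow,
      norm_mul, Padic.norm_p_zpow, neg_neg, PadicInt.norm_def, _root_.zpow_neg,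
      ← le_inv_mul_iff₀ (zpow_pos hp _), mul_one]
  · obtain ⟨k, rfl⟩ := Int.exists_eq_neg_ofNat hd
    have norm_le_one := PadicInt.norm_le_one ((p : ℤ_[p]) ^ k * x)
    rw [PadicInt.norm_def, PadicInt.coe_mul, PadicInt.coe_pow, PadicInt.coe_natCast] at norm_le_one
    simpa only [neg_neg, zpow_natCast, Int.toNat_neg_natCast, pow_zero, isUnit_one,
      IsUnit.dvd, iff_true] using norm_le_one

theorem padicIntToZMod_eq_zero_iff {x : ℤ_[p]} : PadicInt.toZMod x = 0 ↔ (p : ℤ_[p]) ∣ x := by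
  rw [← RingHom.mem_ker, PadicInt.ker_toZMod, PadicInt.maximalIdeal_eq_span_p,
    Ideal.mem_span_singleton]

end PadicIntegers

section DiagStabilizer

variable {p}

instance : BorelSpace (GL (Fin 3) ℚ_[p]) := ⟨rfl⟩

variable (p) in
/-- The inclusion of `GL₃(ℤ_p)` into `GL₃(ℚ_p)`, with range `padicK p`. -/
def padicInclusion : GL (Fin 3) ℤ_[p] →* GL (Fin 3) ℚ_[p] :=
  GeneralLinearGroup.map PadicInt.Coe.ringHom

theorem padicK_eq_range : padicK p = (padicInclusion p).range := rfl

theorem continuous_padicInclusion : Continuous (padicInclusion p) :=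
  Continuous.units_map _ <| continuous_id.matrix_map continuous_subtype_val

theorem measurableSet_padicK : MeasurableSet (padicK p) := by
  have : CompactSpace (Matrix (Fin 3) (Fin 3) ℤ_[p]) :=
    inferInstanceAs (CompactSpace (Fin 3 → Fin 3 → ℤ_[p]))
  rw [padicK_eq_range, MonoidHom.coe_range]
  exact (isCompact_range continuous_padicInclusion).measurableSet

variable (p) in
/-- The group `K_p ∩ g K_p g⁻¹` for `g = diag(p^a, p^b, p^c)`, encoded as a subgroup of
`GL₃(ℤ_p)`. -/
def padicDiagStabilizer (a b c : ℤ) : Subgroup (GL (Fin 3) ℤ_[p]) :=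
  (MulAut.conj (padicDiag p a b c) • (padicInclusion p).range).comap (padicInclusion p)

theorem measure_padicDoubleCoset {μ : Measure (GL (Fin 3) ℚ_[p])} [μ.IsMulLeftInvariant]
    (hμ : μ (padicK p) = 1) {a b c : ℤ} (h : (padicDiagStabilizer p a b c).index ≠ 0) :
    μ (padicDoubleCoset p a b c) = (padicDiagStabilizer p a b c).index := by
  have doubleCoset_eq : padicDoubleCoset p a b c =
      DoubleCoset.doubleCoset (padicDiag p a b c)
        (padicInclusion p).range (padicInclusion p).range :=
    Set.ext fun x => DoubleCoset.mem_doubleCoset.symm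
  rw [padicDiagStabilizer, Subgroup.index_comap] at h ⊢
  rw [doubleCoset_eq, measure_doubleCoset μ _ measurableSet_padicK h, ← padicK_eq_range, hμ,
    mul_one]

theorem inv_padicDiag_mul_mul_padicDiag_apply (a b c : ℤ) (k : GL (Fin 3) ℚ_[p]) (i j : Fin 3) :
    ((padicDiag p a b c)⁻¹ * k * padicDiag p a b c) i j =
      (p : ℚ_[p]) ^ (-(![a, b, c] i - ![a, b, c] j)) * k i j := by
  have hp : (p : ℚ_[p]) ≠ 0 := mod_cast (Fact.out : p.Prime).ne_zero
  have diag_eq : (padicDiag p a b c).1 = diagonal fun i => (p : ℚ_[p]) ^ ![a, b, c] i := by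
    ext i j; fin_cases i <;> fin_cases j <;> simp [padicDiag]
  have diag_inv_eq :
      (padicDiag p a b c)⁻¹.1 = diagonal fun i => (p : ℚ_[p]) ^ (-![a, b, c] i) := by
    change diagonal _ = _
    ext i j; fin_cases i <;> fin_cases j <;> simp
  rw [Units.val_mul, Units.val_mul, diag_eq, diag_inv_eq, mul_diagonal, diagonal_mul, neg_sub',
    sub_neg_eq_add, zpow_add₀ hp, mul_right_comm]

theorem mem_padicDiagStabilizer {a b c : ℤ} {k : GL (Fin 3) ℤ_[p]} :
    k ∈ padicDiagStabilizer p a b c ↔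
      ∀ i j, (p : ℤ_[p]) ^ (![a, b, c] i - ![a, b, c] j).toNat ∣ k i j := by
  set g := padicDiag p a b c
  have det_mem : GeneralLinearGroup.det (g⁻¹ * padicInclusion p k * g) ∈
      (Units.map (PadicInt.Coe.ringHom (p := p) : ℤ_[p] →* ℚ_[p])).range := by
    rw [map_mul, map_mul, mul_right_comm, ← map_mul, inv_mul_cancel, map_one, one_mul]
    exact ⟨GeneralLinearGroup.det k, (GeneralLinearGroup.map_det _ k).symm⟩
  rw [padicDiagStabilizer, Subgroup.mem_comap, Subgroup.mem_pointwise_smul_iff_inv_smul_mem,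
    ← map_inv, MulAut.smul_def, MulAut.conj_apply, inv_inv]
  refine (mem_range_generalLinearGroup_map_iff Subtype.val_injective).trans <|
    (and_iff_left det_mem).trans <| forall₂_congr fun i j => ?_
  rw [inv_padicDiag_mul_mul_padicDiag_apply]
  exact zpow_neg_mul_mem_range_padicIntCoe_iff

end DiagStabilizer

section Reduction

variable {p}

variable (p) in
/-- Reduction modulo `p`. -/
def padicReduction : GL (Fin 3) ℤ_[p] →* GL (Fin 3) (ZMod p) :=
  GeneralLinearGroup.map PadicInt.toZMod

theorem padicReduction_surjective : Function.Surjective (padicReduction p) :=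
  have : IsLocalHom (PadicInt.toZMod (p := p)) := .of_surjective _ (ZMod.ringHom_surjective _)
  generalLinearGroup_map_surjective _ (ZMod.ringHom_surjective _)

theorem mem_comap_padicReduction {e : Fin 3 → ℤ} {k : GL (Fin 3) ℤ_[p]} :
    k ∈ (blockTriangularSubgroup (ZMod p) e).comap (padicReduction p) ↔
      ∀ ⦃i j⦄, e j < e i → (p : ℤ_[p]) ∣ k i j := by
  simp only [Subgroup.mem_comap, mem_blockTriangularSubgroup, ← padicIntToZMod_eq_zero_iff]
  rfl

theorem padicDiagStabilizer_le_comap (a b c : ℤ) : padicDiagStabilizer p a b c ≤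
      (blockTriangularSubgroup (ZMod p) ![a, b, c]).comap (padicReduction p) :=
  fun _ hk => mem_comap_padicReduction.2 fun i j hij =>
    (dvd_pow_self _ (by lia)).trans (mem_padicDiagStabilizer.1 hk i j)

theorem padicDiagStabilizer_eq_comap {a b c : ℤ} (h : ∀ i j, ![a, b, c] i - ![a, b, c] j ≤ 1) :
    padicDiagStabilizer p a b c =
      (blockTriangularSubgroup (ZMod p) ![a, b, c]).comap (padicReduction p) := by
  refine le_antisymm (padicDiagStabilizer_le_comap a b c) fun k hk => ?_
  refine mem_padicDiagStabilizer.2 fun i j => ?_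
  obtain hij | hij := le_or_gt (![a, b, c] i) (![a, b, c] j)
  · simp [Int.toNat_of_nonpos (sub_nonpos.2 hij)]
  · have : (![a, b, c] i - ![a, b, c] j).toNat = 1 := by have := h i j; lia
    rw [this, pow_one]
    exact mem_comap_padicReduction.1 hk hij

theorem card_projectivization_zmod (n : ℕ) :
    Nat.card (ℙ (ZMod p) (Fin n → ZMod p)) = ∑ i ∈ Finset.range n, p ^ i := by
  rw [Projectivization.card_of_finrank _ _ (Module.finrank_fin_fun _), Nat.card_zmod]

theorem index_padicDiagStabilizer_one_zero_zero :
    (padicDiagStabilizer p 1 0 0).index = p ^ 2 + p + 1 := by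
  rw [padicDiagStabilizer_eq_comap (by decide),
    Subgroup.index_comap_of_surjective _ padicReduction_surjective,
    index_blockTriangularSubgroup_succ _ (by decide),
    blockTriangularSubgroup_eq_top _ (by decide), Subgroup.index_top, card_projectivization_zmod]
  simp only [Finset.sum_range_succ, Finset.range_zero, Finset.sum_empty]
  ring

variable (p) in
/-- The Iwahori subgroup: the matrices in `GL₃(ℤ_p)` that are lower triangular modulo `p`. The
weights `(1, 0, -1)` are the exponents of `padicDiag p 1 0 (-1)`. -/
abbrev padicIwahori : Subgroup (GL (Fin 3) ℤ_[p]) :=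
  (blockTriangularSubgroup (ZMod p) ![(1 : ℤ), 0, -1]).comap (padicReduction p)

theorem index_padicIwahori : (padicIwahori p).index = (p + 1) * (p ^ 2 + p + 1) := by
  rw [Subgroup.index_comap_of_surjective _ padicReduction_surjective,
    index_blockTriangularSubgroup_succ _ (by decide),
    index_blockTriangularSubgroup_succ _ (by decide),
    blockTriangularSubgroup_eq_top _ (by decide), Subgroup.index_top, card_projectivization_zmod,
    card_projectivization_zmod]
  simp only [Finset.sum_range_succ, Finset.range_zero, Finset.sum_empty]
  ring

theorem mem_padicDiagStabilizer_iff_of_mem_padicIwahori {k : GL (Fin 3) ℤ_[p]}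
    (hk : k ∈ padicIwahori p) :
    k ∈ padicDiagStabilizer p 1 0 (-1) ↔ (p : ℤ_[p]) ^ 2 ∣ k 0 2 := by
  rw [mem_comap_padicReduction] at hk
  have dvd_01 : (p : ℤ_[p]) ∣ k 0 1 := hk (by decide)
  have dvd_12 : (p : ℤ_[p]) ∣ k 1 2 := hk (by decide)
  simp [mem_padicDiagStabilizer, Fin.forall_fin_succ, dvd_01, dvd_12]

theorem toZMod_apply_zero_zero_ne_zero {k : GL (Fin 3) ℤ_[p]}
    (hk : padicReduction p k ∈ rowParabolic (ZMod p) 2) : PadicInt.toZMod (k 0 0) ≠ 0 := by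
  have det_ne_zero := (padicReduction p k).det_ne_zero
  rw [det_eq_mul_det_submatrix_succ (mem_rowParabolic.1 hk)] at det_ne_zero
  exact left_ne_zero_of_mul det_ne_zero

/-- The unipotent matrix `1 + p y E₀₂`. Letting `y` run through representatives of the residues
modulo `p` gives representatives of the cosets of `padicDiagStabilizer p 1 0 (-1)` in
`padicIwahori p`. -/
def cornerTransvection (y : ℤ_[p]) : GL (Fin 3) ℤ_[p] :=
  GeneralLinearGroup.mk'' (transvection 0 2 (p * y))
    (by rw [det_transvection_of_ne _ _ (by decide)]; exact isUnit_one)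

theorem cornerTransvection_mem_padicIwahori (y : ℤ_[p]) :
    cornerTransvection y ∈ padicIwahori p := by
  refine mem_comap_padicReduction.2 fun i j hij => ?_
  change _ ∣ transvection 0 2 (p * y) i j
  rw [transvection, Matrix.add_apply, one_apply_ne (by rintro rfl; exact hij.false), zero_add,
    single_apply]
  split_ifs <;> simp

theorem mul_cornerTransvection_apply_zero_two (k : GL (Fin 3) ℤ_[p]) (y : ℤ_[p]) :
    (k * cornerTransvection y) 0 2 = k 0 2 + p * y * k 0 0 :=
  mul_transvection_apply_same 0 2 0 (p * y) k.1

theorem relIndex_padicDiagStabilizer_padicIwahori :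
    (padicDiagStabilizer p 1 0 (-1)).relIndex (padicIwahori p) = p := by
  have hp : (p : ℤ_[p]) ≠ 0 := mod_cast (Fact.out : p.Prime).ne_zero
  obtain ⟨lift, toZMod_lift⟩ :=
    (ZMod.ringHom_surjective (PadicInt.toZMod (p := p))).hasRightInverse
  let u (x : ZMod p) : padicIwahori p :=
    ⟨cornerTransvection (lift x), cornerTransvection_mem_padicIwahori _⟩
  rw [relIndex_eq_card_of_existsUnique_mul_mem u, Nat.card_zmod]
  intro k hk
  obtain ⟨d, hd⟩ : (p : ℤ_[p]) ∣ k 0 2 := mem_comap_padicReduction.1 hk (by decide)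
  have pivot_ne_zero : PadicInt.toZMod (k 0 0) ≠ 0 :=
    toZMod_apply_zero_zero_ne_zero <| mem_rowParabolic.2 fun j =>
      hk (by fin_cases j <;> decide)
  have entry_eq (x : ZMod p) : (k * u x) 0 2 = p * (d + lift x * k 0 0) := by
    rw [mul_cornerTransvection_apply_zero_two, hd]
    ring
  have mul_mem_iff (x : ZMod p) : k * u x ∈ padicDiagStabilizer p 1 0 (-1) ↔
      x = -PadicInt.toZMod d / PadicInt.toZMod (k 0 0) := by
    rw [mem_padicDiagStabilizer_iff_of_mem_padicIwahori (mul_mem hk (u x).2), entry_eq, pow_two,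
      mul_dvd_mul_iff_left hp, ← padicIntToZMod_eq_zero_iff, map_add, map_mul, toZMod_lift,
      eq_div_iff pivot_ne_zero, eq_neg_iff_add_eq_zero, add_comm]
  simp only [mul_mem_iff, existsUnique_eq]

theorem index_padicDiagStabilizer_one_zero_neg_one :
    (padicDiagStabilizer p 1 0 (-1)).index = (p ^ 2 + p) * (p ^ 2 + p + 1) := by
  rw [← Subgroup.relIndex_mul_index (padicDiagStabilizer_le_comap 1 0 (-1)),
    relIndex_padicDiagStabilizer_padicIwahori, index_padicIwahori]
  ring

end Reduction

/-- `μ_p(K_p(1,0,0)) = p² + p + 1` and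
`μ_p(K_p(1,0,−1)) = (p² + p)(p² + p + 1)`. -/
theorem statement1 (μ : Measure (GL (Fin 3) ℚ_[p])) [μ.IsHaarMeasure]
    (hμ : μ (padicK p) = 1) :
    μ (padicDoubleCoset p 1 0 0) = ((p : ENNReal) ^ 2 + p + 1) ∧
    μ (padicDoubleCoset p 1 0 (-1)) = ((p : ENNReal) ^ 2 + p) * ((p : ENNReal) ^ 2 + p + 1) := by
  have hp := (Fact.out : p.Prime).pos
  constructor
  · rw [measure_padicDoubleCoset hμ (by rw [index_padicDiagStabilizer_one_zero_zero]; positivity),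
      index_padicDiagStabilizer_one_zero_zero]
    push_cast
    rfl
  · rw [measure_padicDoubleCoset hμ
      (by rw [index_padicDiagStabilizer_one_zero_neg_one]; positivity),
      index_padicDiagStabilizer_one_zero_neg_one]
    push_cast
    rfl

end
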